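/- Let p ∈ (0,1) and let J_t = exp((α − β²/2) t + β B_t) be a geometric Brownian motion with drift α ∈ ℝ and volatility β > 0, J_0 = 1 (B a standard Brownian motion). Let k̃ = sup over u ∈ [0,1] of { p α u − (p(1−p)/2) β² u² }. Then for all t ≥ 0 and x, y ≥ 0, 0 ≤ E[(x + y J_t)^p] ≤ e^{k̃ t} (x + y)^p. -/

import Mathlib

open MeasureTheory ProbabilityTheory

/-- Exponential moments of a centred Gaussian variable. -/
lemma gbm_exp_moment {Ω : Type*} [MeasurableSpace Ω] (μ : Measure Ω) [IsProbabilityMeasure μ]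
    (X : Ω → ℝ) (t : ℝ) (ht : 0 ≤ t)
    (hX : Measure.map X μ = gaussianReal 0 (ENNReal.ofReal t).toNNReal) (c d : ℝ) :
    Integrable (fun ω => Real.exp (c + d * X ω)) μ ∧
      ∫ ω, Real.exp (c + d * X ω) ∂μ = Real.exp (c + d ^ 2 * t / 2) := by
  have hm : AEMeasurable X μ := by
    by_contra h
    rw [Measure.map_of_not_aemeasurable h] at hX
    exact (IsProbabilityMeasure.ne_zero (gaussianReal 0 (ENNReal.ofReal t).toNNReal)) hX.symm
  have hi : Integrable (fun ω => Real.exp (d * X ω)) μ := by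
    have h := integrable_exp_mul_gaussianReal (μ := 0) (v := (ENNReal.ofReal t).toNNReal) d
    rw [← hX] at h
    exact h.comp_aemeasurable hm
  have hv : ∫ ω, Real.exp (d * X ω) ∂μ = Real.exp (d ^ 2 * t / 2) := by
    have h := mgf_gaussianReal hX d
    rw [mgf] at h
    rw [h, ENNReal.coe_toNNReal_eq_toReal, ENNReal.toReal_ofReal ht]
    congr 1
    ring
  simp only [Real.exp_add]
  refine ⟨hi.const_mul _, ?_⟩
  rw [integral_const_mul, hv]

/-- The maximiser of the concave quadratic on the unit interval. -/
lemma gbm_opt (p α β : ℝ) (hp : p ∈ Set.Ioo (0:ℝ) 1) (hβ : 0 < β) :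
    ∃ u ∈ Set.Icc (0:ℝ) 1, 0 ≤ u * (α - (1 - p) * β ^ 2 * u) ∧
      (1 - u) * (α - (1 - p) * β ^ 2 * u) ≤ 0 := by
  have hq : 0 < (1 - p) * β ^ 2 := mul_pos (by linarith [hp.2]) (by positivity)
  rcases le_or_gt α 0 with h | h
  · exact ⟨0, by simp, by simp, by simpa using h⟩
  rcases le_or_gt ((1 - p) * β ^ 2) α with hge | hge
  · exact ⟨1, by simp, by simpa using hge, by simp⟩
  · have : α - (1 - p) * β ^ 2 * (α / ((1 - p) * β ^ 2)) = 0 := by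
      rw [mul_div_cancel₀ _ hq.ne']; ring
    refine ⟨α / ((1 - p) * β ^ 2), ⟨by positivity, ?_⟩, ?_, ?_⟩
    · rw [div_le_one hq]; exact hge.le
    · rw [this]; simp
    · rw [this]; simp

/-- Tangent-line bound for the concave power function. -/
lemma gbm_tangent (p w a : ℝ) (hp : p ∈ Set.Ioo (0:ℝ) 1) (hw : 0 ≤ w) (ha : 0 < a) :
    w ^ p ≤ (1 - p) * a ^ p + p * a ^ (p - 1) * w := by
  have h := Real.geom_mean_le_arith_mean2_weighted hp.1.le (by linarith [hp.2] : 0 ≤ 1 - p)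
    hw ha.le (by ring)
  have h2 := mul_le_mul_of_nonneg_right h (Real.rpow_nonneg ha.le (p - 1))
  have e1 : a ^ (1 - p) * a ^ (p - 1) = 1 := by
    rw [← Real.rpow_add ha]; simp
  have e2 : a * a ^ (p - 1) = a ^ p := by
    rw [Real.rpow_sub_one ha.ne']; field_simp
  calc w ^ p = w ^ p * a ^ (1 - p) * a ^ (p - 1) := by rw [mul_assoc, e1, mul_one]
    _ ≤ _ := h2
    _ = (1 - p) * (a * a ^ (p - 1)) + p * a ^ (p - 1) * w := by ring
    _ = _ := by rw [e2]

theorem gbm_power_moment_bound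
    {Ω : Type*} [MeasurableSpace Ω] (μ : Measure Ω) [IsProbabilityMeasure μ]
    (p α β : ℝ) (hp : p ∈ Set.Ioo (0:ℝ) 1) (hβ : 0 < β)
    (B : ℝ → Ω → ℝ) (hB0 : ∀ ω, B 0 ω = 0)
    (hBlaw : ∀ t : ℝ, 0 ≤ t →
      Measure.map (B t) μ = gaussianReal 0 (ENNReal.ofReal t).toNNReal)
    (J : ℝ → Ω → ℝ)
    (hJ : ∀ t ω, J t ω = Real.exp ((α - β ^ 2 / 2) * t + β * B t ω))
    (k : ℝ)
    (hk : k = sSup {z : ℝ | ∃ u : ℝ, u ∈ Set.Icc (0:ℝ) 1 ∧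
      z = p * α * u - p * (1 - p) / 2 * β ^ 2 * u ^ 2})
    (t x y : ℝ) (ht : 0 ≤ t) (hx : 0 ≤ x) (hy : 0 ≤ y) :
    0 ≤ (∫ ω, (x + y * J t ω) ^ p ∂μ) ∧
      (∫ ω, (x + y * J t ω) ^ p ∂μ) ≤ Real.exp (k * t) * (x + y) ^ p := by
  have hw : ∀ ω, 0 ≤ x + y * J t ω := fun ω => by rw [hJ]; positivity
  have hn : ∀ ω, 0 ≤ (x + y * J t ω) ^ p := fun ω => Real.rpow_nonneg (hw ω) p
  refine ⟨integral_nonneg hn, ?_⟩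
  rcases (add_nonneg hx hy).eq_or_lt' with hs | hs
  · have hx0 : x = 0 := by linarith
    have hy0 : y = 0 := by linarith
    simp [hx0, hy0, Real.zero_rpow hp.1.ne']
  obtain ⟨hp0, hp1⟩ := hp
  obtain ⟨u, hu, h1, h2⟩ := gbm_opt p α β ⟨hp0, hp1⟩ hβ
  have hku : p * α * u - p * (1 - p) / 2 * β ^ 2 * u ^ 2 ≤ k := by
    rw [hk]
    refine le_csSup ⟨p * |α|, ?_⟩ ⟨u, hu, rfl⟩
    rintro z ⟨v, ⟨hv0, hv1⟩, rfl⟩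
    have a1 : 0 ≤ p * (1 - p) / 2 * β ^ 2 * v ^ 2 := by
      have : 0 < 1 - p := by linarith
      positivity
    have a2 : α * v ≤ |α| := by
      calc α * v ≤ |α| * v := mul_le_mul_of_nonneg_right (le_abs_self α) hv0
        _ ≤ |α| * 1 := mul_le_mul_of_nonneg_left hv1 (abs_nonneg α)
        _ = |α| := mul_one _
    nlinarith [mul_le_mul_of_nonneg_left a2 hp0.le]
  set c : ℝ := (α * u - u ^ 2 * β ^ 2 / 2) * t with hc
  set m : ℝ := (α - β ^ 2 / 2) * t with hm
  obtain ⟨i1, e1⟩ := gbm_exp_moment μ (B t) t ht (hBlaw t ht) (p * c) (p * (u * β))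
  obtain ⟨i2, e2⟩ := gbm_exp_moment μ (B t) t ht (hBlaw t ht) ((p - 1) * c) ((p - 1) * (u * β))
  obtain ⟨i3, e3⟩ := gbm_exp_moment μ (B t) t ht (hBlaw t ht) ((p - 1) * c + m)
    ((p - 1) * (u * β) + β)
  have b1 : Real.exp (p * c + (p * (u * β)) ^ 2 * t / 2) ≤ Real.exp (k * t) := by
    apply Real.exp_le_exp.mpr
    refine le_trans (le_of_eq ?_) (mul_le_mul_of_nonneg_right hku ht)
    rw [hc]; ring
  have b2 : Real.exp ((p - 1) * c + ((p - 1) * (u * β)) ^ 2 * t / 2) ≤ Real.exp (k * t) := by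
    apply Real.exp_le_exp.mpr
    refine le_trans (le_of_eq ?_) (mul_le_mul_of_nonneg_right
      (by linarith : (p * α * u - p * (1 - p) / 2 * β ^ 2 * u ^ 2)
        - u * (α - (1 - p) * β ^ 2 * u) ≤ k) ht)
    rw [hc]; ring
  have b3 : Real.exp ((p - 1) * c + m + ((p - 1) * (u * β) + β) ^ 2 * t / 2)
      ≤ Real.exp (k * t) := by
    apply Real.exp_le_exp.mpr
    refine le_trans (le_of_eq ?_) (mul_le_mul_of_nonneg_right
      (by linarith : (p * α * u - p * (1 - p) / 2 * β ^ 2 * u ^ 2)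
        + (1 - u) * (α - (1 - p) * β ^ 2 * u) ≤ k) ht)
    rw [hc, hm]; ring
  rw [← e1] at b1
  rw [← e2] at b2
  rw [← e3] at b3
  set s := x + y with hsdef
  have hsp : 0 < s ^ p := Real.rpow_pos_of_pos hs p
  have hsq : 0 < s ^ (p - 1) := Real.rpow_pos_of_pos hs _
  have hss : s ^ (p - 1) * s = s ^ p := by
    rw [Real.rpow_sub_one hs.ne']; field_simp
  have hpt : ∀ ω, (x + y * J t ω) ^ p ≤
      ((1 - p) * s ^ p) * Real.exp (p * c + p * (u * β) * B t ω)
      + ((p * s ^ (p - 1) * x) * Real.exp ((p - 1) * c + (p - 1) * (u * β) * B t ω)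
      + (p * s ^ (p - 1) * y) *
        Real.exp ((p - 1) * c + m + ((p - 1) * (u * β) + β) * B t ω)) := by
    intro ω
    have h := gbm_tangent p (x + y * J t ω) (s * Real.exp (c + u * β * B t ω)) ⟨hp0, hp1⟩
      (hw ω) (by positivity)
    refine h.trans (le_of_eq ?_)
    rw [Real.mul_rpow hs.le (Real.exp_pos _).le, Real.mul_rpow hs.le (Real.exp_pos _).le,
      ← Real.exp_mul, ← Real.exp_mul, hJ]
    have f1 : (c + u * β * B t ω) * p = p * c + p * (u * β) * B t ω := by ring
    have f2 : (c + u * β * B t ω) * (p - 1) = (p - 1) * c + (p - 1) * (u * β) * B t ω := by ring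
    have f3 : (p - 1) * c + m + ((p - 1) * (u * β) + β) * B t ω
      = ((p - 1) * c + (p - 1) * (u * β) * B t ω) + (m + β * B t ω) := by ring
    rw [f1, f2, f3, Real.exp_add ((p - 1) * c + (p - 1) * (u * β) * B t ω)]
    ring
  have j1 := i1.const_mul ((1 - p) * s ^ p)
  have j2 := i2.const_mul (p * s ^ (p - 1) * x)
  have j3 := i3.const_mul (p * s ^ (p - 1) * y)
  have hle := integral_mono_of_nonneg (Filter.Eventually.of_forall hn) (j1.add (j2.add j3))
    (Filter.Eventually.of_forall hpt)
  refine hle.trans ?_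
  have hq : 0 ≤ 1 - p := by linarith
  rw [integral_add' j1 (j2.add j3), integral_add' j2 j3, integral_const_mul, integral_const_mul,
    integral_const_mul]
  have g1 := mul_le_mul_of_nonneg_left b1 (by positivity : 0 ≤ (1 - p) * s ^ p)
  have g2 := mul_le_mul_of_nonneg_left b2 (by positivity : 0 ≤ p * s ^ (p - 1) * x)
  have g3 := mul_le_mul_of_nonneg_left b3 (by positivity : 0 ≤ p * s ^ (p - 1) * y)
  refine (add_le_add g1 (add_le_add g2 g3)).trans (le_of_eq ?_)
  calc _ = Real.exp (k * t) * ((1 - p) * s ^ p + p * (s ^ (p - 1) * (x + y))) := by ring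
    _ = _ := by rw [← hsdef, hss]; ring
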